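/- (Split decomposition) For 0 ≤ i ≤ d set U_i = τ_i(A)E*_rW, with U_{−1} = 0 and U_{d+1} = 0. Then: (i) each U_i is one-dimensional and W = U_0 ⊕ U_1 ⊕ ··· ⊕ U_d (direct sum); (ii) U_i = (Σ_{h=0}^i E*_{r+h}W) ∩ (Σ_{h=i}^d E_{t+h}W) for 0 ≤ i ≤ d; (iii) (A − θ_{t+i}I)U_i = U_{i+1} and (A* − θ*_{r+i}I)U_i = U_{i−1} for 0 ≤ i ≤ d. -/

import Mathlib

open Matrix
open scoped Classical

noncomputable section

/-- The full setup: a `Q`-polynomial distance-regular graph `Γ = (X,R)` of diameter `D ≥ 3`,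
with adjacency matrix `A`, primitive idempotents `E_i`, eigenvalues `θ_i`,
Krein parameters `q^h_{ij}`, a fixed base vertex `x`, dual primitive idempotents `E*_i`,
dual adjacency matrix `A*` and dual eigenvalues `θ*_i`. -/
structure TSetup (X : Type*) [Fintype X] [DecidableEq X] where
  G : SimpleGraph X
  hGconn : G.Connected
  D : ℕ
  hD3 : 3 ≤ D
  hDiamLe : ∀ y z : X, G.dist y z ≤ D
  hDiamEq : ∃ y z : X, G.dist y z = D
  p : ℕ → ℕ → ℕ → ℕ
  hDRG : ∀ h i j : ℕ, h ≤ D → i ≤ D → j ≤ D → ∀ y z : X, G.dist y z = h →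
    Nat.card {w : X // G.dist y w = i ∧ G.dist z w = j} = p h i j
  A : Matrix X X ℂ
  hA : ∀ y z : X, A y z = if G.Adj y z then 1 else 0
  E : ℕ → Matrix X X ℂ
  hEzero : ∀ i : ℕ, D < i → E i = 0
  hEsum : ∑ i ∈ Finset.range (D + 1), E i = 1
  hEidem : ∀ i j : ℕ, i ≤ D → j ≤ D → E i * E j = if i = j then E i else 0
  hEsymm : ∀ i : ℕ, (E i)ᵀ = E i
  hEreal : ∀ i : ℕ, (E i).map (starRingEnd ℂ) = E i
  hE0 : E 0 = (Fintype.card X : ℂ)⁻¹ • Matrix.of (fun _ _ => (1 : ℂ))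
  θ : ℕ → ℝ
  hθinj : ∀ i j : ℕ, i ≤ D → j ≤ D → θ i = θ j → i = j
  hAspec : A = ∑ i ∈ Finset.range (D + 1), (θ i : ℂ) • E i
  q : ℕ → ℕ → ℕ → ℝ
  hKrein : ∀ i j : ℕ, i ≤ D → j ≤ D →
    Matrix.hadamard (E i) (E j) =
      (Fintype.card X : ℂ)⁻¹ • ∑ h ∈ Finset.range (D + 1), (q h i j : ℂ) • E h
  hQpoly0 : ∀ h i j : ℕ, h ≤ D → i ≤ D → j ≤ D →
    (i + j < h ∨ h + j < i ∨ h + i < j) → q h i j = 0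
  hQpoly1 : ∀ h i j : ℕ, h ≤ D → i ≤ D → j ≤ D →
    (h = i + j ∨ i = h + j ∨ j = h + i) → q h i j ≠ 0
  x : X
  Estar : ℕ → Matrix X X ℂ
  hEstarzero : ∀ i : ℕ, D < i → Estar i = 0
  hEstar : ∀ i : ℕ, i ≤ D → ∀ y z : X,
    Estar i y z = if y = z ∧ G.dist x y = i then 1 else 0
  Astar : Matrix X X ℂ
  hAstar : ∀ y z : X, Astar y z = if y = z then (Fintype.card X : ℂ) * E 1 x y else 0
  θstar : ℕ → ℝ
  hθstarinj : ∀ i j : ℕ, i ≤ D → j ≤ D → θstar i = θstar j → i = j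
  hAstarspec : Astar = ∑ i ∈ Finset.range (D + 1), (θstar i : ℂ) • Estar i

variable {X : Type*} [Fintype X] [DecidableEq X]

/-- The Terwilliger algebra `T = T(x)`, generated by `A` and `A*`. -/
def TSetup.T (S : TSetup X) : Subalgebra ℂ (Matrix X X ℂ) :=
  Algebra.adjoin ℂ {S.A, S.Astar}

/-- A thin irreducible `T`-module `W` with endpoint `r`, dual endpoint `t` and diameter `d`,
where `E*_i W ≠ 0` iff `r ≤ i ≤ r + d` and `E_i W ≠ 0` iff `t ≤ i ≤ t + d`. -/
structure TMod (S : TSetup X) where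
  W : Submodule ℂ (X → ℂ)
  hWinv : ∀ B ∈ S.T, ∀ w ∈ W, B *ᵥ w ∈ W
  hWne : W ≠ ⊥
  hWirr : ∀ U : Submodule ℂ (X → ℂ), U ≤ W →
    (∀ B ∈ S.T, ∀ w ∈ U, B *ᵥ w ∈ U) → U = ⊥ ∨ U = W
  hthin : ∀ i : ℕ, Module.finrank ℂ (W.map (S.Estar i).mulVecLin) ≤ 1
  r : ℕ
  t : ℕ
  d : ℕ
  hr : ∀ i : ℕ, W.map (S.Estar i).mulVecLin ≠ ⊥ ↔ r ≤ i ∧ i ≤ r + d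
  ht : ∀ i : ℕ, W.map (S.E i).mulVecLin ≠ ⊥ ↔ t ≤ i ∧ i ≤ t + d

open Classical in
/-- The action of a matrix `B` on `W` (the restriction of `B` to `W`; defined to be `0`
if `B` does not leave `W` invariant). -/
def actW (S : TSetup X) (M : TMod S) (B : Matrix X X ℂ) : M.W →ₗ[ℂ] M.W :=
  if h : ∀ w ∈ M.W, B.mulVecLin w ∈ M.W then B.mulVecLin.restrict h else 0

/-- `tr_W(B)`: the trace of the action of `B` on `W`. -/
def trW (S : TSetup X) (M : TMod S) (B : Matrix X X ℂ) : ℂ :=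
  LinearMap.trace ℂ M.W (actW S M B)

/-- `a_i(W) = tr_W(E*_{r+i} A)`. -/
def aW (S : TSetup X) (M : TMod S) (i : ℕ) : ℂ :=
  trW S M (S.Estar (M.r + i) * S.A)

/-- `x_i(W) = tr_W(E*_{r+i} A E*_{r+i-1} A)`, with `x_0(W) = 0`. -/
def xW (S : TSetup X) (M : TMod S) (i : ℕ) : ℂ :=
  if i = 0 then 0 else trW S M (S.Estar (M.r + i) * S.A * S.Estar (M.r + i - 1) * S.A)

/-- `a*_i(W) = tr_W(E_{t+i} A*)`. -/
def astarW (S : TSetup X) (M : TMod S) (i : ℕ) : ℂ :=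
  trW S M (S.E (M.t + i) * S.Astar)

/-- `x*_i(W) = tr_W(E_{t+i} A* E_{t+i-1} A*)`, with `x*_0(W) = 0`. -/
def xstarW (S : TSetup X) (M : TMod S) (i : ℕ) : ℂ :=
  if i = 0 then 0 else trW S M (S.E (M.t + i) * S.Astar * S.E (M.t + i - 1) * S.Astar)

/-- The polynomials `p_i`: `p_0 = 1`, `p_{-1} = 0`,
`λ p_i = p_{i+1} + a_i(W) p_i + x_i(W) p_{i-1}`. -/
def pW (S : TSetup X) (M : TMod S) : ℕ → Polynomial ℂ
  | 0 => 1
  | 1 => Polynomial.X - Polynomial.C (aW S M 0)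
  | (n + 2) =>
      (Polynomial.X - Polynomial.C (aW S M (n + 1))) * pW S M (n + 1)
        - Polynomial.C (xW S M (n + 1)) * pW S M n

/-- The polynomials `p*_i`: `p*_0 = 1`, `p*_{-1} = 0`,
`λ p*_i = p*_{i+1} + a*_i(W) p*_i + x*_i(W) p*_{i-1}`. -/
def pstarW (S : TSetup X) (M : TMod S) : ℕ → Polynomial ℂ
  | 0 => 1
  | 1 => Polynomial.X - Polynomial.C (astarW S M 0)
  | (n + 2) =>
      (Polynomial.X - Polynomial.C (astarW S M (n + 1))) * pstarW S M (n + 1)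
        - Polynomial.C (xstarW S M (n + 1)) * pstarW S M n

/-- The Hermitian inner product `⟨u,v⟩ = Σ_y u_y conj(v_y)` on `ℂ^X`. -/
def herm (u v : X → ℂ) : ℂ := ∑ y, u y * (starRingEnd ℂ) (v y)

/-- `ν(W)`, the multiplicative inverse of `m_0(W) = tr_W(E_t E*_r)`. -/
def nuW (S : TSetup X) (M : TMod S) : ℂ :=
  (trW S M (S.E M.t * S.Estar M.r))⁻¹

/-- `k_i(W) = ν(W) m*_i(W)` where `m*_i(W) = tr_W(E*_{r+i} E_t)`. -/
def kW (S : TSetup X) (M : TMod S) (i : ℕ) : ℂ :=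
  nuW S M * trW S M (S.Estar (M.r + i) * S.E M.t)

/-- `k*_i(W) = ν(W) m_i(W)` where `m_i(W) = tr_W(E_{t+i} E*_r)`. -/
def kstarW (S : TSetup X) (M : TMod S) (i : ℕ) : ℂ :=
  nuW S M * trW S M (S.E (M.t + i) * S.Estar M.r)

/-!
Put `P i = E*_r W + ⋯ + E*_{r+i-1} W` and `Q i = E_{t+i} W + ⋯ + E_{t+d} W`. Since `A` acts
block-tridiagonally on the `E*_j W` and `A*` on the `E_j W`, the map `A - θ_{t+i}` sends `P i` into
`P (i+1)` and `Q i` into `Q (i+1)`, while `A* - θ*_{r+i}` sends `P (i+1)` into `P i` and `Q (i+1)`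
into `Q i`. Therefore the sum of all `P i ∩ Q i` is a submodule of `W`; it lies in `Q 1 ≠ W`, so it
vanishes by irreducibility. The `U i = P (i+1) ∩ Q i` also add up to a submodule, which contains
`U 0 = E*_r W ≠ 0`, hence to `W`, and they are independent because `P i ∩ Q i = 0` for all `i`.
For the same reason `U i` embeds in `P (i+1) / P i`, which is a line as `W` is thin. Finally
`A - θ_{t+i}` cannot kill `U i` for `i < d`, nor `A* - θ*_{r+i}` kill `U i` for `0 < i ≤ d`:
otherwise `U 0 + ⋯ + U i`, respectively `U i + ⋯ + U d`, would be a proper nonzero submodule. So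
every `U i` is a line, and these maps carry it onto its neighbours; in particular
`U i = τ_i(A) U 0`.
-/

section Lattice

variable {α : Type*}

theorem isAtom_of_disjoint_of_le_sup [Lattice α] [OrderBot α] [IsModularLattice α] {a b c : α}
    (ha : IsAtom a) (hc : c ≠ ⊥) (hcb : Disjoint b c) (hle : c ≤ b ⊔ a) : IsAtom c := by
  have hb : b ⩿ b ⊔ a := by
    rcases ha.le_iff.1 (inf_le_right : b ⊓ a ≤ a) with h | h
    · exact (covBy_sup_of_inf_covBy_right (h ▸ bot_covBy_iff.2 ha)).wcovBy
    · exact (sup_eq_left.2 (inf_eq_right.1 h)).symm ▸ WCovBy.rfl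
  rcases hb.eq_or_eq le_sup_left (sup_le le_sup_left hle) with h | h
  · exact absurd (hcb.eq_bot_of_ge (sup_eq_left.1 h)) hc
  · have hlt : b < b ⊔ c :=
      lt_of_le_of_ne le_sup_left fun h' => hc (hcb.eq_bot_of_ge (sup_eq_left.1 h'.symm))
    have hcov : b ⋖ b ⊔ c := (h ▸ hb).covBy_of_lt hlt
    exact bot_covBy_iff.1 (hcb.eq_bot ▸ inf_covBy_of_covBy_sup_left hcov)

theorem iSupIndep_succ_inf [CompleteLattice α] [IsModularLattice α] {p q : ℕ → α}
    (hp : Monotone p) (hq : Antitone q) (hpq : ∀ i, Disjoint (p i) (q i)) :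
    iSupIndep fun i => p (i + 1) ⊓ q i := by
  intro i
  have hsup : ⨆ (j) (_ : j ≠ i), p (j + 1) ⊓ q j ≤ p i ⊔ q (i + 1) := by
    refine iSup₂_le fun j hj => ?_
    rcases lt_or_gt_of_ne hj with h | h
    · exact inf_le_left.trans ((hp h).trans le_sup_left)
    · exact inf_le_right.trans ((hq h).trans le_sup_right)
  have hmod : (p i ⊔ q (i + 1)) ⊓ p (i + 1) = p i := by
    rw [sup_inf_assoc_of_le _ (hp i.le_succ), (hpq (i + 1)).symm.eq_bot, sup_bot_eq]
  refine Disjoint.mono_right hsup (disjoint_iff_inf_le.2 ?_)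
  calc p (i + 1) ⊓ q i ⊓ (p i ⊔ q (i + 1)) = (p i ⊔ q (i + 1)) ⊓ p (i + 1) ⊓ q i := by
        rw [inf_comm, inf_assoc]
    _ = p i ⊓ q i := by rw [hmod]
    _ ≤ ⊥ := (hpq i).le_bot

end Lattice

section InvariantSubspaces

open Module

variable {K V : Type*} [CommRing K] [AddCommGroup V] [Module K V]

theorem map_le_of_mem_adjoin {N : Submodule K V} {s : Set (End K V)}
    (hs : ∀ f ∈ s, N.map f ≤ N) {f : End K V} (hf : f ∈ Algebra.adjoin K s) : N.map f ≤ N := by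
  simp only [Submodule.map_le_iff_le_comap] at hs ⊢
  induction hf using Algebra.adjoin_induction with
  | mem f hf => exact hs f hf
  | algebraMap c => exact fun v hv => N.smul_mem c hv
  | add _ _ _ _ hf hg => exact fun v hv => N.add_mem (hf hv) (hg hv)
  | mul _ _ _ _ hf hg => exact fun v hv => hf (hg hv)

theorem map_sub_smul_one_le {N N' : Submodule K V} {f : End K V} (hN : N ≤ N')
    (hf : N.map f ≤ N') (c : K) : N.map (f - c • 1) ≤ N' := by
  rintro _ ⟨v, hv, rfl⟩
  exact N'.sub_mem (hf ⟨v, hv, rfl⟩) (N'.smul_mem c (hN hv))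

theorem map_le_of_map_sub_smul_one_le {N N' : Submodule K V} {f : End K V} {c : K} (hN : N ≤ N')
    (hf : N.map (f - c • 1) ≤ N') : N.map f ≤ N' := by
  simpa [sub_eq_add_neg] using map_sub_smul_one_le hN hf (-c)

end InvariantSubspaces

section SpectralDecomposition

variable {K R R' : Type*} [Field K] [Ring R] [Algebra K R] [Ring R'] [Algebra K R']

/-- A spectral decomposition `b = ∑ θ i • e i`, `0 ≤ i ≤ D`, of an element `b` of an algebra, with
orthogonal idempotents `e i` adding up to `1` and distinct scalars `θ i`. -/
structure IsSpectralDecomposition (b : R) (e : ℕ → R) (θ : ℕ → K) (D : ℕ) : Prop where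
  orthogonal : OrthogonalIdempotents e
  sum_eq_one : ∑ i ∈ Finset.range (D + 1), e i = 1
  injOn : Set.InjOn θ (Finset.range (D + 1))
  eq_sum : b = ∑ i ∈ Finset.range (D + 1), θ i • e i

namespace IsSpectralDecomposition

variable {b : R} {e : ℕ → R} {θ : ℕ → K} {D : ℕ}

theorem map (h : IsSpectralDecomposition b e θ D) (f : R →ₐ[K] R') :
    IsSpectralDecomposition (f b) (fun i => f (e i)) θ D where
  orthogonal := h.orthogonal.map f.toRingHom
  sum_eq_one := by rw [← map_sum, h.sum_eq_one, map_one]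
  injOn := h.injOn
  eq_sum := by rw [h.eq_sum, map_sum]; simp only [map_smul]

theorem eq_zero (h : IsSpectralDecomposition b e θ D) {i : ℕ} (hi : D < i) : e i = 0 := by
  rw [← mul_one (e i), ← h.sum_eq_one]
  exact h.orthogonal.mul_sum_of_notMem (Finset.mem_range_succ_iff.not.2 hi.not_ge)

theorem mul_eq_smul (h : IsSpectralDecomposition b e θ D) (i : ℕ) : b * e i = θ i • e i := by
  rcases lt_or_ge D i with hi | hi
  · simp [h.eq_zero hi]
  · rw [h.eq_sum, Finset.sum_mul, Finset.sum_eq_single_of_mem i (Finset.mem_range_succ_iff.2 hi)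
      fun j _ hj => by rw [smul_mul_assoc, h.orthogonal.ortho hj, smul_zero],
      smul_mul_assoc, (h.orthogonal.idem i).eq]

theorem aeval_mul (h : IsSpectralDecomposition b e θ D) (p : Polynomial K) (i : ℕ) :
    Polynomial.aeval b p * e i = p.eval (θ i) • e i := by
  induction p using Polynomial.induction_on' with
  | add p q hp hq => simp only [map_add, add_mul, hp, hq, Polynomial.eval_add, add_smul]
  | monomial n c =>
    have hpow : b ^ n * e i = θ i ^ n • e i := by
      induction n with
      | zero => simp
      | succ n ih =>
        rw [pow_succ, mul_assoc, h.mul_eq_smul, mul_smul_comm, ih, smul_smul, pow_succ']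
    rw [Polynomial.aeval_monomial, Polynomial.eval_monomial, ← Algebra.smul_def, smul_mul_assoc,
      hpow, smul_smul]

theorem aeval_lagrangeBasis (h : IsSpectralDecomposition b e θ D) {i : ℕ} (hi : i ≤ D) :
    Polynomial.aeval b (Lagrange.basis (Finset.range (D + 1)) θ i) = e i := by
  have hi' : i ∈ Finset.range (D + 1) := Finset.mem_range_succ_iff.2 hi
  rw [← mul_one (Polynomial.aeval b _), ← h.sum_eq_one, Finset.mul_sum,
    Finset.sum_eq_single_of_mem i hi' fun j hj hji => by
      rw [h.aeval_mul, Lagrange.eval_basis_of_ne hji.symm hj, zero_smul],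
    h.aeval_mul, Lagrange.eval_basis_self h.injOn hi', one_smul]

theorem mem_adjoin (h : IsSpectralDecomposition b e θ D) (i : ℕ) :
    e i ∈ Algebra.adjoin K {b} := by
  rcases lt_or_ge D i with hi | hi
  · exact h.eq_zero hi ▸ zero_mem _
  · exact h.aeval_lagrangeBasis hi ▸ Polynomial.aeval_mem_adjoin_singleton K b

end IsSpectralDecomposition

end SpectralDecomposition

section ComponentSum

variable {K V ι : Type*} [CommRing K] [AddCommGroup V] [Module K V]

/-- The sum of the components `F h W`, `h ∈ s`, of a subspace `W` under a family of projections
`F`. -/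
def componentSum (W : Submodule K V) (F : ι → Module.End K V) (s : Finset ι) : Submodule K V :=
  ⨆ h ∈ s, W.map (F h)

variable {W : Submodule K V} {F : ι → Module.End K V} {s t : Finset ι}

theorem componentSum_mono (h : s ⊆ t) : componentSum W F s ≤ componentSum W F t :=
  biSup_mono h

theorem componentSum_empty : componentSum W F ∅ = ⊥ := by simp [componentSum]

theorem componentSum_insert [DecidableEq ι] (i : ι) :
    componentSum W F (insert i s) = W.map (F i) ⊔ componentSum W F s :=
  Finset.iSup_insert i s _

theorem apply_mem_componentSum {h : ι} (hs : h ∈ s) {w : V} (hw : w ∈ W) :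
    F h w ∈ componentSum W F s :=
  Submodule.mem_iSup_of_mem h (Submodule.mem_iSup_of_mem hs (Submodule.mem_map_of_mem hw))

theorem map_componentSum_le_iff {f : Module.End K V} {N : Submodule K V} :
    (componentSum W F s).map f ≤ N ↔ ∀ h ∈ s, ∀ w ∈ W, f (F h w) ∈ N := by
  simp only [componentSum, Submodule.map_iSup, iSup_le_iff]
  exact forall₂_congr fun h _ => by
    rw [Submodule.map_le_iff_le_comap, Submodule.map_le_iff_le_comap]; rfl

end ComponentSum

section TridiagonalGrading

open Module

variable {K V : Type*} [Field K] [AddCommGroup V] [Module K V]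

/-- The subspace `W` is the direct sum of the nonzero subspaces `F 0 W, …, F d W`, where `F i` acts
on `W` as the projection onto `F i W`; the map `B` acts on `F i W` as the scalar `θ i`, and `C` acts
on this grading block-tridiagonally. -/
structure IsTridiagonalGrading (W : Submodule K V) (B C : End K V) (F : ℕ → End K V) (θ : ℕ → K)
    (d : ℕ) : Prop where
  map_le : ∀ i, W.map (F i) ≤ W
  map_le_of_tridiagonal : W.map C ≤ W
  sum_apply : ∀ w ∈ W, ∑ i ∈ Finset.range (d + 1), F i w = w
  mul_eq_zero : ∀ i j, i ≠ j → F i * F j = 0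
  mul_eq_smul : ∀ i, B * F i = θ i • F i
  tridiagonal : ∀ i j, i + 1 < j ∨ j + 1 < i → F i * C * F j = 0
  map_ne_bot : ∀ i ≤ d, W.map (F i) ≠ ⊥

namespace IsTridiagonalGrading

variable {W : Submodule K V} {B C : End K V} {F : ℕ → End K V} {θ : ℕ → K} {d : ℕ}
  {s t : Finset ℕ}

theorem componentSum_le (h : IsTridiagonalGrading W B C F θ d) (s : Finset ℕ) :
    componentSum W F s ≤ W :=
  iSup₂_le fun i _ => h.map_le i

theorem componentSum_range (h : IsTridiagonalGrading W B C F θ d) :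
    componentSum W F (Finset.range (d + 1)) = W := by
  refine le_antisymm (h.componentSum_le _) fun w hw => ?_
  rw [← h.sum_apply w hw]
  exact sum_mem fun i hi => apply_mem_componentSum hi hw

theorem componentSum_ne (h : IsTridiagonalGrading W B C F θ d) {i : ℕ} (hi : i ≤ d)
    (his : i ∉ s) : componentSum W F s ≠ W := by
  intro heq
  refine h.map_ne_bot i hi (le_bot_iff.1 ?_)
  nth_rewrite 1 [← heq]
  refine map_componentSum_le_iff.2 fun j hj w _ => ?_
  have hij : F i * F j = 0 := h.mul_eq_zero i j (ne_of_mem_of_not_mem hj his).symm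
  exact (Submodule.mem_bot K).2 (LinearMap.congr_fun hij w)

theorem map_sub_componentSum_le (h : IsTridiagonalGrading W B C F θ d) {i : ℕ}
    (hst : s ⊆ insert i t) : (componentSum W F s).map (B - θ i • 1) ≤ componentSum W F t := by
  refine map_componentSum_le_iff.2 fun j hj w hw => ?_
  have heigen : (B - θ i • 1) (F j w) = (θ j - θ i) • F j w := by
    rw [sub_smul, ← LinearMap.smul_apply (θ j), ← h.mul_eq_smul j]
    rfl
  rw [heigen]
  rcases Finset.mem_insert.1 (hst hj) with rfl | hjt
  · rw [sub_self, zero_smul]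
    exact zero_mem _
  · exact Submodule.smul_mem _ _ (apply_mem_componentSum hjt hw)

theorem map_tridiagonal_componentSum_le (h : IsTridiagonalGrading W B C F θ d)
    (hst : ∀ i ∈ s, ∀ j ≤ d, j ≤ i + 1 → i ≤ j + 1 → j ∈ t) :
    (componentSum W F s).map C ≤ componentSum W F t := by
  refine map_componentSum_le_iff.2 fun i hi w hw => ?_
  have hC : C (F i w) ∈ W :=
    h.map_le_of_tridiagonal (Submodule.mem_map_of_mem (h.map_le i (Submodule.mem_map_of_mem hw)))
  rw [← h.sum_apply _ hC]
  refine sum_mem fun j hj => ?_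
  by_cases hij : j ≤ i + 1 ∧ i ≤ j + 1
  · exact apply_mem_componentSum (hst i hi j (Finset.mem_range_succ_iff.1 hj) hij.1 hij.2) hC
  · have hzero : F j (C (F i w)) = 0 :=
      LinearMap.congr_fun (h.tridiagonal j i (by omega)) w
    rw [hzero]
    exact zero_mem _

end IsTridiagonalGrading

theorem IsSpectralDecomposition.isTridiagonalGrading {B C : End K V} {e : ℕ → End K V} {θ : ℕ → K}
    {D : ℕ} (h : IsSpectralDecomposition B e θ D) {W : Submodule K V} (hB : W.map B ≤ W)
    (hC : W.map C ≤ W) (htri : ∀ i j, i + 1 < j ∨ j + 1 < i → e i * C * e j = 0) {s d : ℕ}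
    (hsupp : ∀ i, W.map (e i) ≠ ⊥ ↔ s ≤ i ∧ i ≤ s + d) :
    IsTridiagonalGrading W B C (fun i => e (s + i)) (fun i => θ (s + i)) d where
  map_le i := map_le_of_mem_adjoin (by simpa using hB) (h.mem_adjoin (s + i))
  map_le_of_tridiagonal := hC
  sum_apply w hw := by
    have hD : s + d ≤ D := by
      by_contra! hlt
      exact (hsupp (s + d)).2 ⟨by omega, le_rfl⟩ (by rw [h.eq_zero hlt, Submodule.map_zero])
    have hzero (i : ℕ) (hi : ¬(s ≤ i ∧ i ≤ s + d)) : e i w = 0 :=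
      (Submodule.mem_bot K).1 (not_not.1 (mt (hsupp i).1 hi) ▸ Submodule.mem_map_of_mem hw)
    calc ∑ i ∈ Finset.range (d + 1), e (s + i) w
        = ∑ i ∈ Finset.Ico s (s + d + 1), e i w := by
          rw [Finset.sum_Ico_eq_sum_range, add_assoc, Nat.add_sub_cancel_left]
      _ = ∑ i ∈ Finset.range (D + 1), e i w := by
          refine Finset.sum_subset (fun i => by simp only [Finset.mem_Ico, Finset.mem_range]; omega)
            fun i _ hi => hzero i ?_
          simpa only [Finset.mem_Ico, Nat.lt_succ_iff] using hi
      _ = w := by rw [← LinearMap.sum_apply, h.sum_eq_one, End.one_apply]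
  mul_eq_zero i j hij := h.orthogonal.ortho (by simpa using hij)
  mul_eq_smul i := h.mul_eq_smul (s + i)
  tridiagonal i j hij := htri _ _ (by omega)
  map_ne_bot i hi := (hsupp (s + i)).2 ⟨by omega, by omega⟩

end TridiagonalGrading

section LeonardSystem

open Module

variable {K V : Type*} [Field K] [AddCommGroup V] [Module K V]

/-- A Leonard system of diameter `d` on the subspace `W`: the components `E i W`, on which `A` is
scalar, and `Es i W`, on which `As` is scalar, are ordered so that `As` and `A` act
block-tridiagonally on them, and the `Es i W` are lines. The usual requirement that the
off-diagonal blocks be nonzero is encoded as irreducibility of `W` under `A` and `As`. -/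
structure IsLeonardSystem (W : Submodule K V) (A As : End K V) (E Es : ℕ → End K V)
    (θ θs : ℕ → K) (d : ℕ) : Prop where
  grading : IsTridiagonalGrading W A As E θ d
  dualGrading : IsTridiagonalGrading W As A Es θs d
  finrank_map_eq_one : ∀ i ≤ d, finrank K (W.map (Es i)) = 1
  irreducible : ∀ N ≤ W, N.map A ≤ N → N.map As ≤ N → N = ⊥ ∨ N = W

/-- The component `(∑_{h ≤ i} Es h W) ∩ (∑_{i ≤ h ≤ d} E h W)` of the split decomposition of `W`. It
vanishes for `i > d`, where `Finset.Icc i d` is empty. -/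
def splitComponent (W : Submodule K V) (E Es : ℕ → End K V) (d i : ℕ) : Submodule K V :=
  componentSum W Es (Finset.range (i + 1)) ⊓ componentSum W E (Finset.Icc i d)

theorem splitComponent_eq_bot_of_lt {W : Submodule K V} {E Es : ℕ → End K V} {d i : ℕ}
    (hi : d < i) : splitComponent W E Es d i = ⊥ := by
  rw [splitComponent, Finset.Icc_eq_empty_of_lt hi, componentSum_empty, inf_bot_eq]

namespace IsLeonardSystem

variable {W : Submodule K V} {A As : End K V} {E Es : ℕ → End K V} {θ θs : ℕ → K} {d : ℕ}

theorem iSup_eq_bot_or_eq {ι : Type*} (H : IsLeonardSystem W A As E Es θ θs d)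
    {N : ι → Submodule K V} (hW : ∀ j, N j ≤ W)
    (hA : ∀ j, ∃ c : K, (N j).map (A - c • 1) ≤ ⨆ k, N k)
    (hAs : ∀ j, ∃ c : K, (N j).map (As - c • 1) ≤ ⨆ k, N k) :
    ⨆ j, N j = ⊥ ∨ ⨆ j, N j = W := by
  refine H.irreducible _ (iSup_le hW) ?_ ?_ <;> rw [Submodule.map_iSup] <;>
    refine iSup_le fun j => ?_
  · obtain ⟨c, hc⟩ := hA j
    exact map_le_of_map_sub_smul_one_le (le_iSup N j) hc
  · obtain ⟨c, hc⟩ := hAs j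
    exact map_le_of_map_sub_smul_one_le (le_iSup N j) hc

theorem map_sub_componentSum_range_le (H : IsLeonardSystem W A As E Es θ θs d) (i : ℕ) (c : K) :
    (componentSum W Es (Finset.range i)).map (A - c • 1) ≤
      componentSum W Es (Finset.range (i + 1)) := by
  refine map_sub_smul_one_le (componentSum_mono (by simp)) ?_ c
  refine H.dualGrading.map_tridiagonal_componentSum_le fun h hh k _ hkh _ => ?_
  rw [Finset.mem_range] at hh ⊢
  omega

theorem map_sub_componentSum_range_succ_le (H : IsLeonardSystem W A As E Es θ θs d) (i : ℕ) :
    (componentSum W Es (Finset.range (i + 1))).map (As - θs i • 1) ≤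
      componentSum W Es (Finset.range i) :=
  H.dualGrading.map_sub_componentSum_le Finset.range_add_one.le

theorem map_sub_componentSum_Icc_le (H : IsLeonardSystem W A As E Es θ θs d) (i : ℕ) :
    (componentSum W E (Finset.Icc i d)).map (A - θ i • 1) ≤
      componentSum W E (Finset.Icc (i + 1) d) := by
  refine H.grading.map_sub_componentSum_le fun h hh => ?_
  simp only [Finset.mem_insert, Finset.mem_Icc] at hh ⊢
  omega

theorem map_sub_componentSum_Icc_succ_le (H : IsLeonardSystem W A As E Es θ θs d) (i : ℕ) (c : K) :
    (componentSum W E (Finset.Icc (i + 1) d)).map (As - c • 1) ≤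
      componentSum W E (Finset.Icc i d) := by
  refine map_sub_smul_one_le
    (componentSum_mono (Finset.Icc_subset_Icc_left i.le_succ)) ?_ c
  refine H.grading.map_tridiagonal_componentSum_le fun h hh k hk _ hhk => ?_
  rw [Finset.mem_Icc] at hh ⊢
  omega

theorem componentSum_Icc_zero (H : IsLeonardSystem W A As E Es θ θs d) :
    componentSum W E (Finset.Icc 0 d) = W := by
  rw [← Nat.range_succ_eq_Icc_zero, H.grading.componentSum_range]

theorem componentSum_Icc_succ_ne (H : IsLeonardSystem W A As E Es θ θs d) (i : ℕ) :
    componentSum W E (Finset.Icc (i + 1) d) ≠ W :=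
  H.grading.componentSum_ne (Nat.zero_le d) (by simp)

theorem disjoint_componentSum (H : IsLeonardSystem W A As E Es θ θs d) (i : ℕ) :
    Disjoint (componentSum W Es (Finset.range i)) (componentSum W E (Finset.Icc i d)) := by
  set N : ℕ → Submodule K V := fun j =>
    componentSum W Es (Finset.range j) ⊓ componentSum W E (Finset.Icc j d) with hN
  have hN0 : N 0 = ⊥ := by simp [hN, componentSum_empty]
  have hsup : ⨆ j, N j = ⊥ ∨ ⨆ j, N j = W := by
    refine H.iSup_eq_bot_or_eq (fun j => inf_le_left.trans (H.dualGrading.componentSum_le _))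
      (fun j => ⟨θ j, ?_⟩) (fun j => ⟨θs (j - 1), ?_⟩)
    · exact (Submodule.map_inf_le _).trans ((inf_le_inf (H.map_sub_componentSum_range_le j _)
        (H.map_sub_componentSum_Icc_le j)).trans (le_iSup N (j + 1)))
    · rcases j with _ | j
      · rw [hN0, Submodule.map_bot]
        exact bot_le
      · exact (Submodule.map_inf_le _).trans ((inf_le_inf (H.map_sub_componentSum_range_succ_le j)
          (H.map_sub_componentSum_Icc_succ_le j _)).trans (le_iSup N j))
  have hle : ⨆ j, N j ≤ componentSum W E (Finset.Icc 1 d) := by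
    refine iSup_le fun j => ?_
    rcases j with _ | j
    · exact hN0.le.trans bot_le
    · exact inf_le_right.trans (componentSum_mono (Finset.Icc_subset_Icc_left (by omega)))
  have hbot : ⨆ j, N j = ⊥ := hsup.resolve_right fun heq =>
    H.componentSum_Icc_succ_ne 0 (le_antisymm (H.grading.componentSum_le _) (heq.ge.trans hle))
  exact disjoint_iff.2 (iSup_eq_bot.1 hbot i)

theorem map_sub_splitComponent_le (H : IsLeonardSystem W A As E Es θ θs d) (i : ℕ) :
    (splitComponent W E Es d i).map (A - θ i • 1) ≤ splitComponent W E Es d (i + 1) :=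
  (Submodule.map_inf_le _).trans
    (inf_le_inf (H.map_sub_componentSum_range_le _ _) (H.map_sub_componentSum_Icc_le i))

theorem map_dual_sub_splitComponent_succ_le (H : IsLeonardSystem W A As E Es θ θs d) (i : ℕ) :
    (splitComponent W E Es d (i + 1)).map (As - θs (i + 1) • 1) ≤ splitComponent W E Es d i :=
  (Submodule.map_inf_le _).trans
    (inf_le_inf (H.map_sub_componentSum_range_succ_le _) (H.map_sub_componentSum_Icc_succ_le i _))

theorem map_dual_sub_splitComponent_zero (H : IsLeonardSystem W A As E Es θ θs d) :
    (splitComponent W E Es d 0).map (As - θs 0 • 1) = ⊥ := by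
  refine le_bot_iff.1 ((Submodule.map_mono inf_le_left).trans ?_)
  simpa [componentSum_empty] using H.map_sub_componentSum_range_succ_le 0

theorem splitComponent_le (H : IsLeonardSystem W A As E Es θ θs d) (i : ℕ) :
    splitComponent W E Es d i ≤ W :=
  inf_le_left.trans (H.dualGrading.componentSum_le _)

theorem splitComponent_zero (H : IsLeonardSystem W A As E Es θ θs d) :
    splitComponent W E Es d 0 = W.map (Es 0) := by
  rw [splitComponent, H.componentSum_Icc_zero, inf_eq_left.2 (H.dualGrading.componentSum_le _)]
  simp [componentSum]

theorem splitComponent_zero_ne_bot (H : IsLeonardSystem W A As E Es θ θs d) :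
    splitComponent W E Es d 0 ≠ ⊥ :=
  H.splitComponent_zero ▸ H.dualGrading.map_ne_bot 0 d.zero_le

theorem iSup_splitComponent (H : IsLeonardSystem W A As E Es θ θs d) :
    ⨆ i, splitComponent W E Es d i = W := by
  set U := splitComponent W E Es d
  refine (H.iSup_eq_bot_or_eq H.splitComponent_le
    (fun i => ⟨θ i, (H.map_sub_splitComponent_le i).trans (le_iSup U _)⟩)
    (fun i => ⟨θs i, ?_⟩)).resolve_left fun h => H.splitComponent_zero_ne_bot (iSup_eq_bot.1 h 0)
  rcases i with _ | i
  · exact H.map_dual_sub_splitComponent_zero.le.trans bot_le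
  · exact (H.map_dual_sub_splitComponent_succ_le i).trans (le_iSup U i)

theorem iSup_fin_splitComponent (H : IsLeonardSystem W A As E Es θ θs d) :
    ⨆ i : Fin (d + 1), splitComponent W E Es d i = W := by
  refine le_antisymm (iSup_le fun i => H.splitComponent_le i) ?_
  conv_lhs => rw [← H.iSup_splitComponent]
  refine iSup_le fun i => ?_
  rcases lt_or_ge d i with hi | hi
  · exact (splitComponent_eq_bot_of_lt hi).le.trans bot_le
  · exact le_iSup (fun j : Fin (d + 1) => splitComponent W E Es d j) ⟨i, Nat.lt_succ_of_le hi⟩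

theorem iSupIndep_splitComponent (H : IsLeonardSystem W A As E Es θ θs d) :
    iSupIndep (splitComponent W E Es d) :=
  iSupIndep_succ_inf (p := fun i => componentSum W Es (Finset.range i))
    (q := fun i => componentSum W E (Finset.Icc i d))
    (fun _ _ h => componentSum_mono (Finset.range_mono h))
    (fun _ _ h => componentSum_mono (Finset.Icc_subset_Icc_left h)) H.disjoint_componentSum

-- Otherwise `U 0 + ⋯ + U i` would be a proper nonzero submodule.
theorem map_sub_splitComponent_ne_bot (H : IsLeonardSystem W A As E Es θ θs d) {i : ℕ}
    (hi : i < d) : (splitComponent W E Es d i).map (A - θ i • 1) ≠ ⊥ := by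
  intro hker
  set U := splitComponent W E Es d
  have hU {j : ℕ} (hj : j ≤ i) : U j ≤ ⨆ k : Set.Iic i, U k :=
    le_iSup (fun k : Set.Iic i => U k) ⟨j, hj⟩
  have hsup : ⨆ j : Set.Iic i, U j = ⊥ ∨ ⨆ j : Set.Iic i, U j = W := by
    refine H.iSup_eq_bot_or_eq (fun j => H.splitComponent_le j) ?_ ?_ <;> rintro ⟨j, hj⟩
    · refine ⟨θ j, ?_⟩
      rcases eq_or_lt_of_le (Set.mem_Iic.1 hj) with rfl | hlt
      · exact hker.le.trans bot_le
      · exact (H.map_sub_splitComponent_le j).trans (hU hlt)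
    · refine ⟨θs j, ?_⟩
      rcases j with _ | j
      · exact H.map_dual_sub_splitComponent_zero.le.trans bot_le
      · exact (H.map_dual_sub_splitComponent_succ_le j).trans (hU (j.le_succ.trans hj))
  rcases hsup with hbot | htop
  · exact H.splitComponent_zero_ne_bot (le_bot_iff.1 ((hU i.zero_le).trans hbot.le))
  · have hle : ⨆ j : Set.Iic i, U j ≤ componentSum W Es (Finset.range (i + 1)) :=
      iSup_le fun j => inf_le_left.trans
        (componentSum_mono (Finset.range_mono (Nat.succ_le_succ j.2)))
    exact H.dualGrading.componentSum_ne hi Finset.notMem_range_self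
      (le_antisymm (H.dualGrading.componentSum_le _) (htop.ge.trans hle))

theorem splitComponent_ne_bot (H : IsLeonardSystem W A As E Es θ θs d) {i : ℕ} (hi : i ≤ d) :
    splitComponent W E Es d i ≠ ⊥ := by
  rcases i with _ | i
  · exact H.splitComponent_zero_ne_bot
  · exact ne_bot_of_le_ne_bot (H.map_sub_splitComponent_ne_bot hi) (H.map_sub_splitComponent_le i)

-- Otherwise `U (i + 1) + ⋯ + U d` would be a proper nonzero submodule.
theorem map_dual_sub_splitComponent_succ_ne_bot (H : IsLeonardSystem W A As E Es θ θs d) {i : ℕ}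
    (hi : i < d) : (splitComponent W E Es d (i + 1)).map (As - θs (i + 1) • 1) ≠ ⊥ := by
  intro hker
  set U := splitComponent W E Es d
  have hU {j : ℕ} (hj : i + 1 ≤ j) : U j ≤ ⨆ k : Set.Ici (i + 1), U k :=
    le_iSup (fun k : Set.Ici (i + 1) => U k) ⟨j, hj⟩
  have hsup : ⨆ j : Set.Ici (i + 1), U j = ⊥ ∨ ⨆ j : Set.Ici (i + 1), U j = W := by
    refine H.iSup_eq_bot_or_eq (fun j => H.splitComponent_le j) ?_ ?_ <;> rintro ⟨j, hj⟩
    · exact ⟨θ j, (H.map_sub_splitComponent_le j).trans (hU (le_add_right hj))⟩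
    · refine ⟨θs j, ?_⟩
      rcases eq_or_lt_of_le (Set.mem_Ici.1 hj) with rfl | hlt
      · exact hker.le.trans bot_le
      · obtain ⟨k, rfl⟩ := Nat.exists_eq_add_one_of_ne_zero hlt.ne_bot
        exact (H.map_dual_sub_splitComponent_succ_le k).trans (hU (Nat.lt_succ_iff.1 hlt))
  rcases hsup with hbot | htop
  · exact H.splitComponent_ne_bot hi (le_bot_iff.1 ((hU le_rfl).trans hbot.le))
  · have hle : ⨆ j : Set.Ici (i + 1), U j ≤ componentSum W E (Finset.Icc (i + 1) d) :=
      iSup_le fun j => inf_le_right.trans (componentSum_mono (Finset.Icc_subset_Icc_left j.2))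
    exact H.componentSum_Icc_succ_ne i
      (le_antisymm (H.grading.componentSum_le _) (htop.ge.trans hle))

theorem isAtom_splitComponent (H : IsLeonardSystem W A As E Es θ θs d) {i : ℕ} (hi : i ≤ d) :
    IsAtom (splitComponent W E Es d i) := by
  have hline : IsAtom (W.map (Es i)) :=
    Submodule.isAtom_iff_finrank_eq_one.2 (H.finrank_map_eq_one i hi)
  refine isAtom_of_disjoint_of_le_sup hline (H.splitComponent_ne_bot hi)
    ((H.disjoint_componentSum i).mono_right inf_le_right) ?_
  rw [sup_comm, ← componentSum_insert, ← Finset.range_add_one]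
  exact inf_le_left

theorem map_sub_splitComponent (H : IsLeonardSystem W A As E Es θ θs d) (i : ℕ) :
    (splitComponent W E Es d i).map (A - θ i • 1) = splitComponent W E Es d (i + 1) := by
  rcases lt_or_ge i d with hi | hi
  · exact ((H.isAtom_splitComponent hi).le_iff.1 (H.map_sub_splitComponent_le i)).resolve_left
      (H.map_sub_splitComponent_ne_bot hi)
  · rw [splitComponent_eq_bot_of_lt (Nat.lt_succ_of_le hi), ← le_bot_iff,
      ← splitComponent_eq_bot_of_lt (Nat.lt_succ_of_le hi)]
    exact H.map_sub_splitComponent_le i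

theorem map_dual_sub_splitComponent_succ (H : IsLeonardSystem W A As E Es θ θs d) {i : ℕ}
    (hi : i < d) :
    (splitComponent W E Es d (i + 1)).map (As - θs (i + 1) • 1) = splitComponent W E Es d i :=
  ((H.isAtom_splitComponent hi.le).le_iff.1 (H.map_dual_sub_splitComponent_succ_le i)).resolve_left
    (H.map_dual_sub_splitComponent_succ_ne_bot hi)

theorem map_aeval_prod_eq_splitComponent (H : IsLeonardSystem W A As E Es θ θs d) (i : ℕ) :
    (W.map (Es 0)).map (Polynomial.aeval A
      (∏ h ∈ Finset.range i, (Polynomial.X - Polynomial.C (θ h)))) = splitComponent W E Es d i := by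
  induction i with
  | zero =>
    rw [Finset.prod_range_zero, map_one, H.splitComponent_zero]
    exact Submodule.map_id _
  | succ i ih =>
    have hfactor : Polynomial.aeval A (Polynomial.X - Polynomial.C (θ i)) = A - θ i • 1 := by
      rw [map_sub, Polynomial.aeval_X, Polynomial.aeval_C, Algebra.algebraMap_eq_smul_one]
    rw [Finset.prod_range_succ, mul_comm, map_mul, hfactor, End.mul_eq_comp, Submodule.map_comp, ih,
      H.map_sub_splitComponent]

end IsLeonardSystem

theorem stmt18_general {W : Submodule K V} {A As : End K V} {E Es : ℕ → End K V} {θ θs : ℕ → K}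
    {d : ℕ} (H : IsLeonardSystem W A As E Es θ θs d) {U : ℕ → Submodule K V}
    (hU : ∀ i ≤ d, U i = (W.map (Es 0)).map
      (Polynomial.aeval A (∏ h ∈ Finset.range i, (Polynomial.X - Polynomial.C (θ h)))))
    (hU_succ : U (d + 1) = ⊥) :
    (∀ i ≤ d, finrank K (U i) = 1) ∧
    iSupIndep (fun i : Fin (d + 1) => U i) ∧
    (⨆ i : Fin (d + 1), U i) = W ∧
    (∀ i ≤ d, U i = (⨆ h ∈ Finset.range (i + 1), W.map (Es h)) ⊓
      (⨆ h ∈ Finset.Icc i d, W.map (E h))) ∧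
    (∀ i ≤ d, (U i).map (A - θ i • 1) = U (i + 1) ∧
      (U i).map (As - θs i • 1) = if i = 0 then ⊥ else U (i - 1)) := by
  have hsplit (i : ℕ) (hi : i ≤ d + 1) : U i = splitComponent W E Es d i := by
    rcases Nat.le_succ_iff.1 hi with hi | rfl
    · rw [hU i hi, H.map_aeval_prod_eq_splitComponent]
    · rw [hU_succ, splitComponent_eq_bot_of_lt d.lt_succ_self]
  have hfin : (fun i : Fin (d + 1) => U i) = fun i : Fin (d + 1) => splitComponent W E Es d i :=
    funext fun i => hsplit i i.2.le
  refine ⟨fun i hi => ?_, ?_, ?_, fun i hi => hsplit i (by omega), fun i hi => ⟨?_, ?_⟩⟩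
  · rw [hsplit i (by omega)]
    exact Submodule.isAtom_iff_finrank_eq_one.1 (H.isAtom_splitComponent hi)
  · rw [hfin]
    exact H.iSupIndep_splitComponent.comp Fin.val_injective
  · rw [hfin, H.iSup_fin_splitComponent]
  · rw [hsplit i (by omega), hsplit (i + 1) (by omega), H.map_sub_splitComponent]
  · rcases i with _ | i
    · rw [hsplit 0 (by omega), H.map_dual_sub_splitComponent_zero, if_pos rfl]
    · rw [hsplit (i + 1) (by omega), H.map_dual_sub_splitComponent_succ hi, if_neg i.succ_ne_zero,
        Nat.add_sub_cancel, hsplit i (by omega)]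

end LeonardSystem

section Hermitian

variable {n R : Type*} [Fintype n] [CommRing R] [PartialOrder R] [StarRing R] [StarOrderedRing R]
  [NoZeroDivisors R]

-- `tr (H Q H P) = tr (Z Zᴴ)` for `Z = P H Q`.
theorem mul_mul_eq_zero_of_trace_eq_zero {H P Q : Matrix n n R} (hH : H.IsHermitian)
    (hP : P.IsHermitian) (hP' : IsIdempotentElem P) (hQ : Q.IsHermitian) (hQ' : IsIdempotentElem Q)
    (htrace : (H * Q * H * P).trace = 0) : P * H * Q = 0 := by
  rw [← trace_mul_conjTranspose_self_eq_zero_iff, ← htrace]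
  calc (P * H * Q * (P * H * Q)ᴴ).trace = (P * (H * (Q * Q) * H * P)).trace := by
        simp only [conjTranspose_mul, hH.eq, hP.eq, hQ.eq, Matrix.mul_assoc]
    _ = (H * Q * H * (P * P)).trace := by
        rw [hQ'.eq, trace_mul_comm, Matrix.mul_assoc]
    _ = (H * Q * H * P).trace := by rw [hP'.eq]

end Hermitian

section MulVecLin

variable {n R : Type*} [Fintype n] [DecidableEq n] [CommRing R]

theorem mulVecLin_aeval (B : Matrix n n R) (p : Polynomial R) :
    (Polynomial.aeval B p).mulVecLin = Polynomial.aeval B.mulVecLin p :=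
  (Polynomial.aeval_algHom_apply (toLinAlgEquiv' : Matrix n n R ≃ₐ[R] _).toAlgHom B p).symm

theorem mulVecLin_sub_smul_one (B : Matrix n n R) (c : R) :
    (B - c • 1).mulVecLin = B.mulVecLin - c • 1 :=
  LinearMap.ext fun v => by simp

end MulVecLin

namespace TSetup

theorem isSpectralDecomposition (S : TSetup X) :
    IsSpectralDecomposition S.A S.E (fun i => (S.θ i : ℂ)) S.D where
  orthogonal := by
    refine OrthogonalIdempotents.iff_mul_eq.2 fun i j => ?_
    rcases lt_or_ge S.D i with hi | hi
    · simp [S.hEzero i hi]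
    rcases lt_or_ge S.D j with hj | hj
    · simp [S.hEzero j hj, (hi.trans_lt hj).ne]
    · exact S.hEidem i j hi hj
  sum_eq_one := S.hEsum
  injOn i hi j hj hij := S.hθinj i j (Finset.mem_range_succ_iff.1 hi)
    (Finset.mem_range_succ_iff.1 hj) (Complex.ofReal_injective hij)
  eq_sum := S.hAspec

theorem Estar_eq_diagonal (S : TSetup X) (i : ℕ) :
    S.Estar i = diagonal fun y => if S.G.dist S.x y = i then 1 else 0 := by
  ext y z
  rcases lt_or_ge S.D i with hi | hi
  · have hne : S.G.dist S.x y ≠ i := ((S.hDiamLe S.x y).trans_lt hi).ne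
    simp [S.hEstarzero i hi, diagonal_apply, hne]
  · rw [S.hEstar i hi, diagonal_apply, ite_and]

theorem isSpectralDecomposition_dual (S : TSetup X) :
    IsSpectralDecomposition S.Astar S.Estar (fun i => (S.θstar i : ℂ)) S.D where
  orthogonal := by
    refine OrthogonalIdempotents.iff_mul_eq.2 fun i j => ?_
    ext y z
    rw [Estar_eq_diagonal, Estar_eq_diagonal, diagonal_mul_diagonal]
    split_ifs <;> simp only [diagonal_apply, Matrix.zero_apply] <;> grind
  sum_eq_one := by
    ext y z
    have hy : S.G.dist S.x y ∈ Finset.range (S.D + 1) :=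
      Finset.mem_range_succ_iff.2 (S.hDiamLe S.x y)
    rcases eq_or_ne y z with rfl | hyz
    · simp only [Estar_eq_diagonal, Matrix.sum_apply, diagonal_apply_eq, one_apply_eq,
        Finset.sum_ite_eq, if_pos hy]
    · simp only [Estar_eq_diagonal, Matrix.sum_apply, diagonal_apply_ne _ hyz, one_apply_ne hyz,
        Finset.sum_const_zero]
  injOn i hi j hj hij := S.hθstarinj i j (Finset.mem_range_succ_iff.1 hi)
    (Finset.mem_range_succ_iff.1 hj) (Complex.ofReal_injective hij)
  eq_sum := S.hAstarspec

theorem Estar_mul_A_mul_Estar_eq_zero (S : TSetup X) (i j : ℕ) (hij : i + 1 < j ∨ j + 1 < i) :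
    S.Estar i * S.A * S.Estar j = 0 := by
  ext y z
  rw [Estar_eq_diagonal, Estar_eq_diagonal, mul_diagonal, diagonal_mul, S.hA]
  by_cases hadj : S.G.Adj y z
  · have hdist := hadj.diff_dist_adj (u := S.x)
    simp only [Matrix.zero_apply, mul_eq_zero, ite_eq_right_iff, one_ne_zero, imp_false]
    omega
  · simp [hadj]

theorem Astar_eq_diagonal (S : TSetup X) :
    S.Astar = diagonal ((Fintype.card X : ℂ) • (S.E 1).row S.x) := by
  ext y z
  rw [S.hAstar, diagonal_apply]
  rfl

theorem E_isHermitian (S : TSetup X) (i : ℕ) : (S.E i).IsHermitian := by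
  rw [IsHermitian, conjTranspose, S.hEsymm]
  exact S.hEreal i

theorem Astar_isHermitian (S : TSetup X) : S.Astar.IsHermitian := by
  rw [Astar_eq_diagonal, isHermitian_diagonal_iff]
  intro y
  have hreal : star (S.E 1 S.x y) = S.E 1 S.x y := congrFun₂ (S.hEreal 1) S.x y
  simp [isSelfAdjoint_iff, hreal]

theorem E_one_mul_hadamard_eq_zero (S : TSetup X) {i j : ℕ} (hi : i ≤ S.D) (hj : j ≤ S.D)
    (hij : i + 1 < j ∨ j + 1 < i) : S.E 1 * (S.E i ⊙ S.E j) = 0 := by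
  have hone : 1 ≤ S.D := le_trans (by norm_num) S.hD3
  rw [S.hKrein i j hi hj, mul_smul_comm, Finset.mul_sum, Finset.sum_eq_zero, smul_zero]
  intro h _
  rcases eq_or_ne h 1 with rfl | hh
  · rw [S.hQpoly0 1 i j hone hi hj (by omega), Complex.ofReal_zero, zero_smul, mul_zero]
  · rw [mul_smul_comm, S.isSpectralDecomposition.orthogonal.ortho hh.symm, smul_zero]

open scoped ComplexOrder in
theorem E_mul_Astar_mul_E_eq_zero (S : TSetup X) (i j : ℕ) (hij : i + 1 < j ∨ j + 1 < i) :
    S.E i * S.Astar * S.E j = 0 := by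
  rcases lt_or_ge S.D i with hi | hi
  · rw [S.hEzero i hi, Matrix.zero_mul, Matrix.zero_mul]
  rcases lt_or_ge S.D j with hj | hj
  · rw [S.hEzero j hj, Matrix.mul_zero]
  have hidem := S.isSpectralDecomposition.orthogonal.idem
  refine mul_mul_eq_zero_of_trace_eq_zero S.Astar_isHermitian (S.E_isHermitian i) (hidem i)
    (S.E_isHermitian j) (hidem j) ?_
  set v := (Fintype.card X : ℂ) • (S.E 1).row S.x with hv
  have hrow : (S.E 1).row S.x ᵥ* (S.E j ⊙ S.E i) = 0 :=
    (mul_apply_eq_vecMul _ _ _).symm.trans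
      (congrFun (S.E_one_mul_hadamard_eq_zero hj hi hij.symm) S.x)
  calc (S.Astar * S.E j * S.Astar * S.E i).trace
      = (diagonal v * S.E j * (S.E i * diagonal v)ᵀ).trace := by
        rw [Astar_eq_diagonal, transpose_mul, diagonal_transpose, S.hEsymm, Matrix.mul_assoc]
    _ = v ᵥ* (S.E j ⊙ S.E i) ⬝ᵥ v := (dotProduct_vecMul_hadamard _ _ _ _).symm
    _ = 0 := by rw [hv, smul_vecMul, hrow, smul_zero, zero_dotProduct]

end TSetup

namespace TMod

variable {S : TSetup X}

theorem map_le (M : TMod S) {B : Matrix X X ℂ} (hB : B ∈ S.T) : M.W.map B.mulVecLin ≤ M.W := by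
  rintro _ ⟨w, hw, rfl⟩
  exact M.hWinv B hB w hw

theorem irreducible (M : TMod S) (N : Submodule ℂ (X → ℂ)) (hN : N ≤ M.W)
    (hA : N.map S.A.mulVecLin ≤ N) (hAstar : N.map S.Astar.mulVecLin ≤ N) :
    N = ⊥ ∨ N = M.W := by
  let φ : Matrix X X ℂ →ₐ[ℂ] Module.End ℂ (X → ℂ) :=
    (toLinAlgEquiv' : Matrix X X ℂ ≃ₐ[ℂ] _).toAlgHom
  refine M.hWirr N hN fun B hB w hw => ?_
  have hφB : φ B ∈ Algebra.adjoin ℂ (φ '' {S.A, S.Astar}) := by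
    rw [← AlgHom.map_adjoin]
    exact Subalgebra.mem_map.2 ⟨B, hB, rfl⟩
  have hgen : ∀ f ∈ φ '' {S.A, S.Astar}, N.map f ≤ N := by
    rintro _ ⟨C, rfl | rfl, rfl⟩
    exacts [hA, hAstar]
  exact map_le_of_mem_adjoin hgen hφB (Submodule.mem_map_of_mem hw)

theorem isLeonardSystem (M : TMod S) :
    IsLeonardSystem M.W S.A.mulVecLin S.Astar.mulVecLin
      (fun i => (S.E (M.t + i)).mulVecLin) (fun i => (S.Estar (M.r + i)).mulVecLin)
      (fun i => (S.θ (M.t + i) : ℂ)) (fun i => (S.θstar (M.r + i) : ℂ)) M.d := by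
  let φ : Matrix X X ℂ →ₐ[ℂ] Module.End ℂ (X → ℂ) :=
    (toLinAlgEquiv' : Matrix X X ℂ ≃ₐ[ℂ] _).toAlgHom
  have hA : M.W.map (φ S.A) ≤ M.W := M.map_le (Algebra.subset_adjoin (Set.mem_insert _ _))
  have hAstar : M.W.map (φ S.Astar) ≤ M.W :=
    M.map_le (Algebra.subset_adjoin (Set.mem_insert_of_mem _ rfl))
  have hfinrank (i : ℕ) (hi : i ≤ M.d) :
      Module.finrank ℂ (M.W.map (S.Estar (M.r + i)).mulVecLin) = 1 :=
    le_antisymm (M.hthin _) (Submodule.one_le_finrank_iff.2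
      ((M.hr _).2 ⟨Nat.le_add_right _ _, Nat.add_le_add_left hi _⟩))
  refine ⟨(S.isSpectralDecomposition.map φ).isTridiagonalGrading hA hAstar
    (fun i j hij => ?_) M.ht,
    (S.isSpectralDecomposition_dual.map φ).isTridiagonalGrading hAstar hA
    (fun i j hij => ?_) M.hr, hfinrank, M.irreducible⟩
  · rw [← map_mul, ← map_mul, S.E_mul_Astar_mul_E_eq_zero i j hij, map_zero]
  · rw [← map_mul, ← map_mul, S.Estar_mul_A_mul_Estar_eq_zero i j hij, map_zero]

end TMod

/-- The split decomposition: with `U_i = τ_i(A) E*_r W` (and `U_{-1} = 0`, `U_{d+1} = 0`):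
(i) each `U_i` is one-dimensional and `W = U_0 ⊕ ⋯ ⊕ U_d`;
(ii) `U_i = (Σ_{h=0}^i E*_{r+h} W) ∩ (Σ_{h=i}^d E_{t+h} W)`;
(iii) `(A - θ_{t+i} I) U_i = U_{i+1}` and `(A* - θ*_{r+i} I) U_i = U_{i-1}`. -/
theorem stmt18 (S : TSetup X) (M : TMod S) (hd : 0 < M.d) :
    let U : ℕ → Submodule ℂ (X → ℂ) := fun i =>
      if i ≤ M.d then
        (M.W.map (S.Estar M.r).mulVecLin).map
          (Polynomial.aeval S.A
            (∏ h ∈ Finset.range i,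
              (Polynomial.X - Polynomial.C ((S.θ (M.t + h) : ℂ))))).mulVecLin
      else ⊥
    (∀ i ≤ M.d, Module.finrank ℂ (U i) = 1) ∧
    iSupIndep (fun i : Fin (M.d + 1) => U (i : ℕ)) ∧
    (⨆ i : Fin (M.d + 1), U (i : ℕ)) = M.W ∧
    (∀ i ≤ M.d,
      U i = (⨆ h ∈ Finset.range (i + 1), M.W.map (S.Estar (M.r + h)).mulVecLin) ⊓
        (⨆ h ∈ Finset.Icc i M.d, M.W.map (S.E (M.t + h)).mulVecLin)) ∧
    (∀ i ≤ M.d,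
      (U i).map (S.A - ((S.θ (M.t + i) : ℂ)) • 1).mulVecLin = U (i + 1) ∧
      (U i).map (S.Astar - ((S.θstar (M.r + i) : ℂ)) • 1).mulVecLin =
        (if i = 0 then ⊥ else U (i - 1))) := by
  intro U
  have hU (i : ℕ) (hi : i ≤ M.d) : U i = _ := if_pos hi
  have hU_succ : U (M.d + 1) = ⊥ := if_neg (by omega)
  simp only [mulVecLin_aeval] at hU
  simpa only [mulVecLin_sub_smul_one] using stmt18_general M.isLeonardSystem hU hU_succ
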